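/- arXiv:1611.06454 — 2 statements merged into one kernel-verified Lean document; each statement's English description precedes it below -/
import Mathlib

section
/- The algebra 𝔑₆ degenerates to 𝔑₉(−1): the structure λ with table e₁e₂ = e₄, e₂e₁ = −e₄, e₂e₂ = e₃ lies in the closure of the GL(V)-orbit of the structure μ with table e₁e₂ = e₃, e₂e₁ = e₄. -/
noncomputable section

/-- `V = ℂ⁴`. -/
abbrev V : Type := Fin 4 → ℂ

/-- The standard basis vectors `e₁, e₂, e₃, e₄` of `V` (indexed by `0, 1, 2, 3`). -/
def e (i : Fin 4) : V := Pi.single i 1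

/-- The `GL(V)`-orbit `O(μ)` of an algebra structure `μ` on `V`, for the action
`(g • μ)(x, y) = g (μ (g⁻¹ x) (g⁻¹ y))`. -/
def orbit (μ : V →L[ℂ] V →L[ℂ] V) : Set (V →L[ℂ] V →L[ℂ] V) :=
  {ν | ∃ g : V ≃L[ℂ] V, ∀ x y : V, ν x y = g (μ (g.symm x) (g.symm y))}

theorem expand_bilin (μ : V →L[ℂ] V →L[ℂ] V) (x y : V) :
    μ x y = ∑ i, ∑ j, (x i * y j) • μ (e i) (e j) := by
  have hx : ∀ x : V, x = ∑ i, x i • e i := by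
    intro x
    ext k
    simp [e, Finset.sum_apply, Pi.single_apply]
  conv_lhs => rw [hx x, hx y]
  simp only [map_sum, map_smul, _root_.sum_apply, _root_.smul_apply,
    Finset.smul_sum, smul_smul]
  rw [Finset.sum_comm]
  simp only [mul_comm]

theorem tendsto_line {E : Type*} [NormedAddCommGroup E] [NormedSpace ℂ E] (a b : E) :
    Filter.Tendsto (fun t : ℂ => a + t • b) (nhdsWithin 0 {0}ᶜ) (nhds a) := by
  have hc : Continuous (fun t : ℂ => a + t • b) := by fun_prop
  have := hc.tendsto 0
  simp only [zero_smul, add_zero] at this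
  exact this.mono_left nhdsWithin_le_nhds

/-- The change of basis. -/
def gInv (t : ℂ) (ht : t ≠ 0) : V ≃ₗ[ℂ] V where
  toFun y := ![(y 0 - y 1) / t, y 1, y 3, (y 2 - y 3) / t]
  invFun x := ![t * x 0 + x 1, x 1, x 2 + t * x 3, x 2]
  map_add' x y := by
    ext k; fin_cases k <;> simp <;> ring
  map_smul' c y := by
    ext k; fin_cases k <;> simp <;> ring
  left_inv y := by
    ext k; fin_cases k <;> simp <;> field_simp <;> ring
  right_inv x := by
    ext k; fin_cases k <;> simp <;> field_simp

/-- The perturbation direction. -/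
def kap : V →L[ℂ] V →L[ℂ] V :=
  (ContinuousLinearMap.proj (R := ℂ) (φ := fun _ : Fin 4 => ℂ) 1).smulRight
    ((ContinuousLinearMap.proj (R := ℂ) (φ := fun _ : Fin 4 => ℂ) 0).smulRight (e 2))

/-- 𝔑₆ degenerates to 𝔑₉(−1). -/
theorem stmt13 (μ lam : V →L[ℂ] V →L[ℂ] V)
    (hμ : ∀ i j : Fin 4, μ (e i) (e j) =
    (![
      ![0, e 2, 0, 0],
      ![e 3, 0, 0, 0],
      ![0, 0, 0, 0],
      ![0, 0, 0, 0]
     ] : Fin 4 → Fin 4 → V) i j)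
    (hlam : ∀ i j : Fin 4, lam (e i) (e j) =
    (![
      ![0, e 3, 0, 0],
      ![-e 3, e 2, 0, 0],
      ![0, 0, 0, 0],
      ![0, 0, 0, 0]
     ] : Fin 4 → Fin 4 → V) i j) :
    lam ∈ closure (orbit μ) := by
  have hm : ∀ x y, μ x y = ![0, 0, x 0 * y 1, x 1 * y 0] := by
    intro x y
    rw [expand_bilin]
    simp only [hμ]
    ext k; fin_cases k <;> simp [Fin.sum_univ_four, e]
  have hl : ∀ x y, lam x y = ![0, 0, x 1 * y 1, x 0 * y 1 - x 1 * y 0] := by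
    intro x y
    rw [expand_bilin]
    simp only [hlam]
    ext k; fin_cases k <;> simp [Fin.sum_univ_four, e] <;> ring
  have hlim : Filter.Tendsto (fun t : ℂ => lam + t • kap) (nhdsWithin 0 {0}ᶜ) (nhds lam) :=
    tendsto_line lam kap
  refine mem_closure_of_tendsto hlim ?_
  filter_upwards [self_mem_nhdsWithin] with t ht
  have ht : t ≠ 0 := ht
  refine ⟨(gInv t ht).toContinuousLinearEquiv, fun x y => ?_⟩
  have h1 : ∀ z : V, (gInv t ht).toContinuousLinearEquiv z
    = ![(z 0 - z 1) / t, z 1, z 3, (z 2 - z 3) / t] := fun _ => rfl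
  have h2 : ∀ z : V, (gInv t ht).toContinuousLinearEquiv.symm z
    = ![t * z 0 + z 1, z 1, z 2 + t * z 3, z 2] := fun _ => rfl
  rw [h1, hm, h2, h2]
  simp only [_root_.add_apply, _root_.smul_apply, hl, kap]
  ext k; fin_cases k <;> simp [e] <;> field_simp <;> ring
end
end

section
/- The algebra 𝔏₁₁ degenerates to 𝔏₁₀: the structure λ with table e₁e₂ = −e₃, e₁e₃ = −e₄, e₂e₁ = e₃, e₂e₂ = e₄, e₃e₁ = e₄ lies in the closure of the GL(V)-orbit of the structure μ with table e₁e₁ = e₄, e₁e₂ = −e₃, e₁e₃ = −e₄, e₂e₁ = e₃, e₂e₂ = e₄, e₃e₁ = e₄. -/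
noncomputable section

theorem vec_eq (x : V) : x = x 0 • e 0 + x 1 • e 1 + x 2 • e 2 + x 3 • e 3 := by
  ext i
  fin_cases i <;> simp [e]

def gs (s : ℂ) (hs : s ≠ 0) : V ≃ₗ[ℂ] V where
  toFun x := fun i => s ^ (i.val + 1) * x i
  invFun x := fun i => (s ^ (i.val + 1))⁻¹ * x i
  map_add' x y := by ext i; simp [mul_add]
  map_smul' c x := by ext i; simp; ring
  left_inv x := by ext i; field_simp
  right_inv x := by ext i; field_simp

theorem cont_aux (E : Type) [NormedAddCommGroup E] [NormedSpace ℂ E] (a b : E) :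
    Continuous (fun s : ℂ => a + s ^ 2 • b) := by fun_prop

theorem mu_formula (c : ℂ) (μ : V →L[ℂ] V →L[ℂ] V)
    (hμ : ∀ i j : Fin 4, μ (e i) (e j) =
    (![
      ![c • e 3, -e 2, -e 3, 0],
      ![e 2, e 3, 0, 0],
      ![e 3, 0, 0, 0],
      ![0, 0, 0, 0]
     ] : Fin 4 → Fin 4 → V) i j) (x y : V) :
    μ x y = (x 1 * y 0 - x 0 * y 1) • e 2
      + (c * x 0 * y 0 - x 0 * y 2 + x 1 * y 1 + x 2 * y 0) • e 3 := by
  conv_lhs => rw [vec_eq x, vec_eq y]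
  simp only [map_add, map_smul, ContinuousLinearMap.add_apply, ContinuousLinearMap.smul_apply, hμ]
  simp
  module

set_option synthInstance.maxHeartbeats 400000 in
set_option maxHeartbeats 2000000 in
/-- 𝔏₁₁ degenerates to 𝔏₁₀. -/
theorem stmt16 (μ lam : V →L[ℂ] V →L[ℂ] V)
    (hμ : ∀ i j : Fin 4, μ (e i) (e j) =
    (![
      ![e 3, -e 2, -e 3, 0],
      ![e 2, e 3, 0, 0],
      ![e 3, 0, 0, 0],
      ![0, 0, 0, 0]
     ] : Fin 4 → Fin 4 → V) i j)
    (hlam : ∀ i j : Fin 4, lam (e i) (e j) =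
    (![
      ![0, -e 2, -e 3, 0],
      ![e 2, e 3, 0, 0],
      ![e 3, 0, 0, 0],
      ![0, 0, 0, 0]
     ] : Fin 4 → Fin 4 → V) i j) :
    lam ∈ closure (orbit μ) := by
  have h1 := mu_formula 1 μ (by simpa using hμ)
  have h0 := mu_formula 0 lam (by simpa using hlam)
  have hs : Filter.Tendsto (fun n : ℕ => (1 / ((n : ℂ) + 1))) Filter.atTop (nhds 0) :=
    tendsto_one_div_add_atTop_nhds_zero_nat
  have hc : Continuous (fun s : ℂ => lam + s ^ 2 • (μ - lam)) :=
    cont_aux (V →L[ℂ] V →L[ℂ] V) lam (μ - lam)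
  have ht := (hc.tendsto 0).comp hs
  have hz : lam + (0 : ℂ) ^ 2 • (μ - lam) = lam := by
    ext x y i
    simp
  rw [hz] at ht
  refine mem_closure_of_tendsto ht (Filter.Eventually.of_forall fun n => ?_)
  have hn : (1 / ((n : ℂ) + 1)) ≠ 0 := one_div_ne_zero (Nat.cast_add_one_ne_zero n)
  simp only [Function.comp]
  generalize (1 / ((n : ℂ) + 1)) = s at hn
  refine ⟨(gs s hn).toContinuousLinearEquiv, fun x y => ?_⟩
  simp only [ContinuousLinearMap.add_apply, ContinuousLinearMap.smul_apply,
    ContinuousLinearMap.sub_apply, h1, h0]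
  ext i
  change _ = s ^ (i.val + 1) * _
  have hg : ∀ (z : V) (k : Fin 4),
    (gs s hn).toContinuousLinearEquiv.symm z k = (s ^ (k.val + 1))⁻¹ * z k := fun _ _ => rfl
  simp only [hg]
  fin_cases i <;> simp [e] <;> field_simp <;> ring
end
end
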